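/- For every positive integer n, the following identity of rational numbers holds: 2 * Σ_{d=1}^{2n-2} Σ_{h=1}^{2n-1-d} Σ_{ℓ=d+h+2}^{2n+1} Σ_{i_1=2}^{ℓ-d-h} Σ_{i_2=1}^{i_1-1} (4n+1-ℓ-d)(ℓ-d-h-i_1+1)(i_1-i_2+1) = (32n^8 + 208n^7 + 112n^6 - 392n^5 - 182n^4 + 217n^3 + 38n^2 - 33n)/315. -/

import Mathlib

/-!
Each of the five sums telescopes. Let `S k` be the difference of binomial coefficients
`S k m = C(m + k + 1, k + 2) - C(m + k - 1, k)`, regarded as a polynomial in `m`, so that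
`S (k + 1) m - S (k + 1) (m - 1) = S k m` and, for `k ≥ 1`, `S k` vanishes at `0` and `1`. With `m = ℓ - d - h`:

* the sum over `i2` is `(i1 - 1) (i1 + 2) / 2 = C(i1 + 1, 2) - 1 = S 0 i1`;
* the sum over `i1` is a convolution with `m - i1 + 1`, which sums twice and gives `S 2 m`;
* summation by parts over `ℓ`, with linear factor `4n + 1 - ℓ - d`, gives
  `K * S 3 M + S 4 (M - 1)`, where `K = 2n - d` and `M = K + 1 - h`. The factor `K` does not
  depend on `h`;
* hence the sum over `h` is `K * S 4 K + S 5 (K - 1)`;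
* summing over `K = 2, …, P` with `P = 2n - 1`, by parts, the two `S 6 (P - 1)` terms cancel and
  `P * S 5 P` remains.

The total is thus `2 (2n - 1) (C(2n + 5, 7) - C(2n + 3, 5))`, which expands to the stated polynomial.
In the code `S 3`, `S 4`, `S 5` are `sThree`, `sFour`, `sFive`.
-/

/-- Telescoping over an integer interval; `a ≤ b + 1` allows the empty interval `b = a - 1`. -/
lemma sum_Icc_int_telescope (f F : ℤ → ℚ) (hF : ∀ x, F x - F (x - 1) = f x) {a b : ℤ}
    (hab : a ≤ b + 1) : ∑ x ∈ Finset.Icc a b, f x = F b - F (a - 1) := by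
  obtain ⟨k, hk⟩ := Int.eq_ofNat_of_zero_le (show 0 ≤ b + 1 - a by omega)
  obtain rfl : b = a - 1 + k := by omega
  clear hab hk
  induction k with
  | zero => simp
  | succ k ih =>
    have hsplit : Finset.Icc a (a - 1 + ((k + 1 : ℕ) : ℤ))
        = insert (a + k) (Finset.Icc a (a - 1 + (k : ℤ))) := by
      ext x
      simp only [Finset.mem_insert, Finset.mem_Icc]
      omega
    rw [hsplit, Finset.sum_insert (by simp), ih, ← hF]
    have h1 : a - 1 + ((k + 1 : ℕ) : ℤ) = a + k := by push_cast; ring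
    have h2 : a + (k : ℤ) - 1 = a - 1 + k := by ring
    rw [h1, h2]
    ring

/-- The polynomial `C(x + 4, 5) - C(x + 2, 3)`. -/
def sThree (x : ℚ) : ℚ :=
  (x + 4) * (x + 3) * (x + 2) * (x + 1) * x / 120 - (x + 2) * (x + 1) * x / 6

/-- The polynomial `C(x + 5, 6) - C(x + 3, 4)`. -/
def sFour (x : ℚ) : ℚ :=
  (x + 5) * (x + 4) * (x + 3) * (x + 2) * (x + 1) * x / 720
    - (x + 3) * (x + 2) * (x + 1) * x / 24

/-- The polynomial `C(x + 6, 7) - C(x + 4, 5)`. -/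
def sFive (x : ℚ) : ℚ :=
  (x + 6) * (x + 5) * (x + 4) * (x + 3) * (x + 2) * (x + 1) * x / 5040
    - (x + 4) * (x + 3) * (x + 2) * (x + 1) * x / 120

lemma sum_i2 (c : ℚ) (i : ℤ) (hi : 1 ≤ i) :
    ∑ j ∈ Finset.Icc (1 : ℤ) (i - 1), c * ((i : ℚ) - j + 1)
      = c * (((i : ℚ) - 1) * (i + 2) / 2) := by
  rw [sum_Icc_int_telescope _ (fun j => c * (((i : ℚ) + 1) * j - j * (j + 1) / 2)) _ (by omega)]
  · push_cast; ring
  · intro x; push_cast; ring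

lemma sum_i1 (c : ℚ) (m : ℤ) (hm : 1 ≤ m) :
    ∑ i ∈ Finset.Icc (2 : ℤ) m, c * ((m : ℚ) - i + 1) * (((i : ℚ) - 1) * (i + 2) / 2)
      = c * (((m : ℚ) - 1) * m * (m + 1) * (m + 6) / 24) := by
  -- Summation by parts: `i (i - 1) (i + 4) / 6` and `(i - 1) i (i + 1) (i + 6) / 24` are the first
  -- and second iterated sums of `(i - 1) (i + 2) / 2`.
  rw [sum_Icc_int_telescope _ (fun i => c * (((m : ℚ) - i + 1) * (i * (i - 1) * (i + 4) / 6)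
    + (i - 2) * (i - 1) * i * (i + 5) / 24)) _ (by omega)]
  · push_cast; ring
  · intro x; push_cast; ring

lemma sum_l (n d h : ℤ) (hh : d + h ≤ 2 * n) :
    ∑ l ∈ Finset.Icc (d + h + 2) (2 * n + 1), (4 * (n : ℚ) + 1 - l - d)
        * (((l : ℚ) - d - h - 1) * (l - d - h) * (l - d - h + 1) * (l - d - h + 6) / 24)
      = (2 * (n : ℚ) - d) * sThree (2 * n - d + 1 - h) + sFour (2 * n - d - h) := by
  rw [sum_Icc_int_telescope _ (fun l => (4 * (n : ℚ) + 1 - l - d) * sThree (l - d - h)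
    + sFour (l - d - h - 1)) _ (by omega)]
  · simp only [sThree, sFour]; push_cast; ring
  · intro x; simp only [sThree, sFour]; push_cast; ring

lemma sum_h (K : ℤ) (hK : 1 ≤ K) :
    ∑ h ∈ Finset.Icc (1 : ℤ) (K - 1), ((K : ℚ) * sThree (K + 1 - h) + sFour (K - h))
      = K * sFour K + sFive (K - 1) := by
  rw [sum_Icc_int_telescope _ (fun h => -((K : ℚ) * sFour (K - h) + sFive (K - h - 1))) _
    (by omega)]
  · simp only [sFour, sFive]; push_cast; ring
  · intro x; simp only [sThree, sFour, sFive]; push_cast; ring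

lemma sum_d (n : ℤ) (hn : 1 ≤ n) :
    ∑ d ∈ Finset.Icc (1 : ℤ) (2 * n - 2),
        ((2 * (n : ℚ) - d) * sFour (2 * n - d) + sFive (2 * n - d - 1))
      = (2 * n - 1) * sFive (2 * n - 1) := by
  -- Summing by parts, the iterated sums of `sFive` from the two summands cancel.
  rw [sum_Icc_int_telescope _ (fun d => -((2 * (n : ℚ) - d - 1) * sFive (2 * n - d - 1))) _
    (by omega)]
  · simp only [sFive]; push_cast; ring
  · intro x; simp only [sFour, sFive]; push_cast; ring

theorem stmt16 (n : ℕ) (hn : 1 ≤ n) :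
    2 * ∑ d ∈ Finset.Icc (1:ℤ) (2*n-2), ∑ h ∈ Finset.Icc (1:ℤ) (2*n-1-d),
        ∑ ℓ ∈ Finset.Icc (d+h+2) (2*n+1),
          ∑ i1 ∈ Finset.Icc (2:ℤ) (ℓ-d-h), ∑ i2 ∈ Finset.Icc (1:ℤ) (i1-1),
            (((4*n+1-ℓ-d)*(ℓ-d-h-i1+1)*(i1-i2+1) : ℤ) : ℚ)
      = (32*(n:ℚ)^8 + 208*(n:ℚ)^7 + 112*(n:ℚ)^6 - 392*(n:ℚ)^5 - 182*(n:ℚ)^4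
          + 217*(n:ℚ)^3 + 38*(n:ℚ)^2 - 33*(n:ℚ))/315 := by
  have key : ∑ d ∈ Finset.Icc (1:ℤ) (2*n-2), ∑ h ∈ Finset.Icc (1:ℤ) (2*n-1-d),
        ∑ ℓ ∈ Finset.Icc (d+h+2) (2*n+1),
          ∑ i1 ∈ Finset.Icc (2:ℤ) (ℓ-d-h), ∑ i2 ∈ Finset.Icc (1:ℤ) (i1-1),
            (((4*n+1-ℓ-d)*(ℓ-d-h-i1+1)*(i1-i2+1) : ℤ) : ℚ)
      = (2 * ((n : ℤ) : ℚ) - 1) * sFive (2 * ((n : ℤ) : ℚ) - 1) := by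
    rw [← sum_d n (by omega)]
    refine Finset.sum_congr rfl fun d hd => ?_
    rw [Finset.mem_Icc] at hd
    have e := sum_h (2 * n - d) (by omega)
    rw [show 2 * (n : ℤ) - d - 1 = 2 * n - 1 - d by ring] at e
    push_cast at e ⊢
    rw [← e]
    refine Finset.sum_congr rfl fun h hh => ?_
    rw [Finset.mem_Icc] at hh
    have e := sum_l n d h (by omega)
    push_cast at e
    rw [← e]
    refine Finset.sum_congr rfl fun l hl => ?_
    rw [Finset.mem_Icc] at hl
    have e := sum_i1 (4 * (n : ℚ) + 1 - l - d) (l - d - h) (by omega)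
    push_cast at e
    rw [← e]
    refine Finset.sum_congr rfl fun i hi => ?_
    rw [Finset.mem_Icc] at hi
    exact sum_i2 _ i (by omega)
  rw [key, sFive]
  push_cast
  ring
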